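/- Let X be an integrable random vector in ℝ^d and Z a random variable taking values in the one-hot label set {z_1,…,z_k} ⊂ {0,1}^k, each with positive probability. Let L : ℝ^k × {z_1,…,z_k} → [0,∞) be a loss function that is convex in its first argument. Suppose that for every class z with P(Z = z) > 0 and every order n ∈ {1,…,N}, the class-conditional moment tensor E[X_{i₁}⋯X_{iₙ} | Z = z] equals the unconditional moment tensor E[X_{i₁}⋯X_{iₙ}] (for all index tuples i₁,…,iₙ). Then for every degree-N polynomial predictor η, the expected loss E[L(η(X), Z)] is at least the trivially attainable loss, i.e. at least inf over constant vectors c ∈ ℝ^k of E[L(c, Z)]. -/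

import Mathlib

open MeasureTheory ProbabilityTheory

/-- A degree-`N` polynomial predictor `x ↦ b + ∑_{n=1}^N A⁽ⁿ⁾[x,…,x]`, where the order-`n`
coefficient tensor `A n : (Fin (n+1) → Fin d) → Fin k → ℝ` (for `n : Fin N`, giving degrees
`1,…,N`) is contracted against `n+1` copies of `x`. -/
noncomputable def polyPred {d k : ℕ} (N : ℕ) (b : Fin k → ℝ)
    (A : (n : Fin N) → ((Fin (n.1 + 1) → Fin d) → Fin k → ℝ)) :
    (Fin d → ℝ) → (Fin k → ℝ) :=
  fun x j => b j + ∑ n : Fin N, ∑ idx : Fin (n.1 + 1) → Fin d, A n idx j * ∏ t, x (idx t)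

/-!
Put `m = 𝔼[η(X)]`. The mean of `η(X)` is an affine function of the moments of `X` of order at
most `N`, so matching moments force `𝔼[η(X) ∣ Z = j] = m` for every class `j`. By Jensen's
inequality within the class, `L(m, j) ≤ 𝔼[L(η(X), j) ∣ Z = j]`. Averaging over the classes shows
that the constant predictor `m` does at least as well as `η`.
-/

section ConditionalJensen

variable {Ω E ι : Type*} [MeasurableSpace Ω] {μ : Measure Ω} [NormedAddCommGroup E]

lemma integrable_cond {f : Ω → E} (hf : Integrable f μ) (s : Set Ω) : Integrable f μ[|s] := by
  rcases eq_or_ne (μ s) 0 with hs | hs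
  · simp [cond_eq_zero_of_meas_eq_zero hs]
  · exact hf.restrict.smul_measure (ENNReal.inv_ne_top.2 hs)

variable [MeasurableSpace ι] [MeasurableSingletonClass ι] {Z : Ω → ι}

lemma ae_eq_cond_fiber {β : Type*} (hZ : Measurable Z) (f : Ω → ι → β) (j : ι) :
    (fun ω => f ω (Z ω)) =ᵐ[μ[|Z ⁻¹' {j}]] fun ω => f ω j := by
  filter_upwards [ae_cond_mem (hZ (measurableSet_singleton j))] with ω hω
  rw [show Z ω = j from hω]

variable [NormedSpace ℝ E]

lemma integral_eq_sum_integral_cond_fiber [IsFiniteMeasure μ] [Fintype ι] (hZ : Measurable Z)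
    {f : Ω → E} (hf : Integrable f μ) :
    ∫ ω, f ω ∂μ = ∑ j, μ.real (Z ⁻¹' {j}) • ∫ ω, f ω ∂μ[|Z ⁻¹' {j}] := by
  conv_lhs => rw [← sum_meas_smul_cond_fiber hZ μ]
  rw [integral_finsetSum_measure fun j _ =>
    (integrable_cond hf _).smul_measure (measure_ne_top μ _)]
  simp only [integral_smul_measure, Measure.real]

variable [CompleteSpace E] [IsFiniteMeasure μ] {s : Set E} {L : E → ι → ℝ} {Y : Ω → E}

lemma map_integral_cond_fiber_le (hZ : Measurable Z) {j : ι} (hj : μ (Z ⁻¹' {j}) ≠ 0)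
    (hL : ConvexOn ℝ s (L · j)) (hLc : ContinuousOn (L · j) s) (hs : IsClosed s)
    (hYs : ∀ᵐ ω ∂μ, Y ω ∈ s) (hY : Integrable Y μ) (hLY : Integrable (fun ω => L (Y ω) (Z ω)) μ) :
    L (∫ ω, Y ω ∂μ[|Z ⁻¹' {j}]) j ≤ ∫ ω, L (Y ω) (Z ω) ∂μ[|Z ⁻¹' {j}] := by
  have := cond_isProbabilityMeasure hj
  have hfiber := ae_eq_cond_fiber (μ := μ) hZ (fun ω => L (Y ω)) j
  rw [integral_congr_ae hfiber]
  exact hL.map_integral_le hLc hs (cond_absolutelyContinuous.ae_le hYs) (integrable_cond hY _)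
    ((integrable_cond hLY _).congr hfiber)

theorem integral_comp_const_le_of_integral_cond_eq [Finite ι] (hZ : Measurable Z)
    (hL : ∀ j, ConvexOn ℝ s (L · j)) (hLc : ∀ j, ContinuousOn (L · j) s) (hs : IsClosed s)
    (hYs : ∀ᵐ ω ∂μ, Y ω ∈ s) (hY : Integrable Y μ) (hLY : Integrable (fun ω => L (Y ω) (Z ω)) μ)
    {m : E} (hm : ∀ j, μ (Z ⁻¹' {j}) ≠ 0 → ∫ ω, Y ω ∂μ[|Z ⁻¹' {j}] = m) :
    ∫ ω, L m (Z ω) ∂μ ≤ ∫ ω, L (Y ω) (Z ω) ∂μ := by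
  have := Fintype.ofFinite ι
  have hLm : Integrable (fun ω => L m (Z ω)) μ := Integrable.of_finite.comp_measurable hZ
  rw [integral_eq_sum_integral_cond_fiber hZ hLm, integral_eq_sum_integral_cond_fiber hZ hLY]
  refine Finset.sum_le_sum fun j _ => ?_
  rcases eq_or_ne (μ (Z ⁻¹' {j})) 0 with hj | hj
  · simp [Measure.real, hj]
  · have := cond_isProbabilityMeasure hj
    refine smul_le_smul_of_nonneg_left ?_ measureReal_nonneg
    calc ∫ ω, L m (Z ω) ∂μ[|Z ⁻¹' {j}] = ∫ _, L m j ∂μ[|Z ⁻¹' {j}] :=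
          integral_congr_ae (ae_eq_cond_fiber hZ (fun _ => L m) j)
      _ = L (∫ ω, Y ω ∂μ[|Z ⁻¹' {j}]) j := by simp [hm j hj]
      _ ≤ ∫ ω, L (Y ω) (Z ω) ∂μ[|Z ⁻¹' {j}] :=
          map_integral_cond_fiber_le hZ hj (hL j) (hLc j) hs hYs hY hLY

end ConditionalJensen

section PolynomialPredictor

variable {Ω : Type*} [MeasurableSpace Ω] {μ : Measure Ω} {d k N : ℕ} {X : Ω → Fin d → ℝ}

lemma integrable_polyPred [IsFiniteMeasure μ]
    (hX : ∀ (n : Fin N) (idx : Fin (n.1 + 1) → Fin d), Integrable (fun ω => ∏ t, X ω (idx t)) μ)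
    (b : Fin k → ℝ) (A : (n : Fin N) → ((Fin (n.1 + 1) → Fin d) → Fin k → ℝ)) :
    Integrable (fun ω => polyPred N b A (X ω)) μ :=
  Integrable.of_eval fun _ => (integrable_const _).add <|
    integrable_finsetSum _ fun n _ => integrable_finsetSum _ fun idx _ => (hX n idx).const_mul _

variable [IsProbabilityMeasure μ]

lemma integral_polyPred
    (hX : ∀ (n : Fin N) (idx : Fin (n.1 + 1) → Fin d), Integrable (fun ω => ∏ t, X ω (idx t)) μ)
    (b : Fin k → ℝ) (A : (n : Fin N) → ((Fin (n.1 + 1) → Fin d) → Fin k → ℝ)) :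
    ∫ ω, polyPred N b A (X ω) ∂μ = fun j => b j + ∑ n : Fin N,
      ∑ idx : Fin (n.1 + 1) → Fin d, A n idx j * ∫ ω, ∏ t, X ω (idx t) ∂μ := by
  ext j
  have hterm (n : Fin N) (idx : Fin (n.1 + 1) → Fin d) :
      Integrable (fun ω => A n idx j * ∏ t, X ω (idx t)) μ := (hX n idx).const_mul _
  have hdegree (n : Fin N) : Integrable (fun ω => ∑ idx, A n idx j * ∏ t, X ω (idx t)) μ :=
    integrable_finsetSum _ fun idx _ => hterm n idx
  calc (∫ ω, polyPred N b A (X ω) ∂μ) j = ∫ ω, polyPred N b A (X ω) j ∂μ :=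
        eval_integral (fun i => (integrable_polyPred hX b A).eval i) j
    _ = b j + ∑ n, ∫ ω, ∑ idx, A n idx j * ∏ t, X ω (idx t) ∂μ := by
        simp only [polyPred]
        rw [integral_add (integrable_const _) (integrable_finsetSum _ fun n _ => hdegree n),
          integral_finsetSum _ fun n _ => hdegree n, integral_const, probReal_univ, one_smul]
    _ = b j + ∑ n, ∑ idx, A n idx j * ∫ ω, ∏ t, X ω (idx t) ∂μ := by
        simp only [integral_finsetSum _ fun idx _ => hterm _ idx, integral_const_mul]

theorem sufficiency_of_moment_matching_general {ι : Type*} [Finite ι] [MeasurableSpace ι]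
    [MeasurableSingletonClass ι] {Z : Ω → ι} (hZ : Measurable Z) {L : (Fin k → ℝ) → ι → ℝ}
    (hL : ∀ j, ConvexOn ℝ Set.univ (L · j))
    (hX : ∀ (n : Fin N) (idx : Fin (n.1 + 1) → Fin d), Integrable (fun ω => ∏ t, X ω (idx t)) μ)
    (hmoments : ∀ j, μ (Z ⁻¹' {j}) ≠ 0 → ∀ (n : Fin N) (idx : Fin (n.1 + 1) → Fin d),
      ∫ ω, ∏ t, X ω (idx t) ∂μ[|Z ⁻¹' {j}] = ∫ ω, ∏ t, X ω (idx t) ∂μ)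
    (b : Fin k → ℝ) (A : (n : Fin N) → ((Fin (n.1 + 1) → Fin d) → Fin k → ℝ))
    (hint : Integrable (fun ω => L (polyPred N b A (X ω)) (Z ω)) μ) :
    ∫ ω, L (∫ ω', polyPred N b A (X ω') ∂μ) (Z ω) ∂μ ≤
      ∫ ω, L (polyPred N b A (X ω)) (Z ω) ∂μ := by
  have hmean (j : ι) (hj : μ (Z ⁻¹' {j}) ≠ 0) :
      ∫ ω, polyPred N b A (X ω) ∂μ[|Z ⁻¹' {j}] = ∫ ω, polyPred N b A (X ω) ∂μ := by
    have := cond_isProbabilityMeasure hj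
    rw [integral_polyPred fun n idx => integrable_cond (hX n idx) _, integral_polyPred hX]
    simp only [hmoments j hj]
  exact integral_comp_const_le_of_integral_cond_eq hZ hL
    (fun j => (hL j).continuousOn isOpen_univ) isClosed_univ (by simp)
    (integrable_polyPred hX b A) hint hmean

end PolynomialPredictor

/-- **Sufficiency of moment matching.** If all class-conditional moment tensors of `X` up to
order `N` agree with the unconditional ones, then no degree-`N` polynomial predictor can beat
the trivially attainable loss for a loss function convex in its first argument. -/
theorem sufficiency_of_moment_matching
    {Ω : Type*} [MeasurableSpace Ω] (μ : Measure Ω) [IsProbabilityMeasure μ]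
    {d k N : ℕ}
    (X : Ω → Fin d → ℝ) (Z : Ω → Fin k)
    (hX : Measurable X) (hZ : Measurable Z)
    (hXint : ∀ i, Integrable (fun ω => X ω i) μ)
    (hZpos : ∀ j : Fin k, 0 < μ (Z ⁻¹' {j}))
    (L : (Fin k → ℝ) → Fin k → ℝ)
    (hL0 : ∀ v j, 0 ≤ L v j)
    (hLconvex : ∀ j, ConvexOn ℝ Set.univ (fun v => L v j))
    (hmomInt : ∀ (n : Fin N) (idx : Fin (n.1 + 1) → Fin d),
      Integrable (fun ω => ∏ t, X ω (idx t)) μ)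
    (hmomCondInt : ∀ (j : Fin k) (n : Fin N) (idx : Fin (n.1 + 1) → Fin d),
      Integrable (fun ω => ∏ t, X ω (idx t)) (μ[|Z ⁻¹' {j}]))
    (hmoments : ∀ (j : Fin k) (n : Fin N) (idx : Fin (n.1 + 1) → Fin d),
      ∫ ω, ∏ t, X ω (idx t) ∂(μ[|Z ⁻¹' {j}]) = ∫ ω, ∏ t, X ω (idx t) ∂μ)
    (b : Fin k → ℝ) (A : (n : Fin N) → ((Fin (n.1 + 1) → Fin d) → Fin k → ℝ))
    (hint : Integrable (fun ω => L (polyPred N b A (X ω)) (Z ω)) μ) :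
    (⨅ c : Fin k → ℝ, ∫ ω, L c (Z ω) ∂μ) ≤ ∫ ω, L (polyPred N b A (X ω)) (Z ω) ∂μ := by
  have hbdd : BddBelow (Set.range fun c : Fin k → ℝ => ∫ ω, L c (Z ω) ∂μ) :=
    ⟨0, Set.forall_mem_range.2 fun c => integral_nonneg fun ω => hL0 c (Z ω)⟩
  exact ciInf_le_of_le hbdd _ <|
    sufficiency_of_moment_matching_general hZ hLconvex hmomInt (fun j _ => hmoments j) b A hint
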